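/- arXiv:1207.7295 — 2 statements merged into one kernel-verified Lean document; each statement's English description precedes it below -/
import Mathlib

section
/- For all n ≥ 2, 0 ≤ k ≤ n−2, and i ∈ ℕ: the number of Dyck paths Q of semilength n such that the fiber of the parent map containing Q has cardinality k+2 and Q has the maximal rank in its fiber and rank(Q) = i, equals the number of Dyck paths Q' of semilength n such that the fiber containing Q' has cardinality k+2, Q' has the minimal rank in its fiber, and rank(Q') = i − k − 1 (this count being 0 if i < k+1). Equivalently, in polynomial form, A_n^{(k)}(x) = x^{k+1} P_n^{(k)}(x), where P_n^{(k)}(x) (resp. A_n^{(k)}(x)) is the generating polynomial by rank of the minimal (resp. maximal) elements of the fibers of cardinality k+2. -/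
/-!
Let `P` be a Dyck path whose last descent has length `ℓ`. The paths with parent `P` are exactly
the sons `son P j`, `0 ≤ j ≤ ℓ`, obtained by inserting a peak into the last descent at height `j`
(`fiber_eq_image`), and inserting a peak at height `j` raises the area by `2 * j + 1` (`area_son`).
Hence the fiber over `P` has `ℓ + 1` elements, its unique bottom is `son P 0` and its unique top
is `son P ℓ`, whose areas differ by `2 * ℓ`. When the fiber has cardinality `k + 2`, `ℓ = k + 1`, so
exchanging the top and the bottom of each fiber is a bijection that shifts the rank by `k + 1`.
-/

/-- A Dyck path is a list of steps in `{+1, -1}` whose partial sums (heights)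
are all nonnegative and whose total sum is `0`. -/
def IsDyck (s : List ℤ) : Prop :=
  (∀ x ∈ s, x = 1 ∨ x = -1) ∧ (∀ i : ℕ, 0 ≤ (s.take i).sum) ∧ s.sum = 0

/-- The area of a path: the sum of all heights `h_0, …, h_{length}`. -/
def area (s : List ℤ) : ℤ :=
  ∑ i ∈ Finset.range (s.length + 1), (s.take i).sum

/-- The length of the last descent, i.e. of the final maximal run of `-1` steps. -/
def lastDescentLen (s : List ℤ) : ℕ :=
  (s.reverse.takeWhile (fun x => x == (-1 : ℤ))).length

/-- The son of a path `s` at height `j`: insert a peak `+1, -1` immediately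
after position `length - j`. -/
def son (s : List ℤ) (j : ℕ) : List ℤ :=
  s.take (s.length - j) ++ [1, -1] ++ s.drop (s.length - j)

/-- The parent of a Dyck path: delete the two steps `s_p, s_{p+1}` where `p` is
the largest (1-indexed) position carrying a `+1` step (the last peak). -/
def parent (s : List ℤ) : List ℤ :=
  s.take (s.length - lastDescentLen s - 1) ++ s.drop (s.length - lastDescentLen s + 1)

/-- The fiber of the parent map containing `Q`: all Dyck paths of the same
length as `Q` with the same parent. -/
def fiber (Q : List ℤ) : Set (List ℤ) :=
  {R : List ℤ | IsDyck R ∧ R.length = Q.length ∧ parent R = parent Q}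

/-! ### Last descents -/

theorem lastDescentLen_append_one (u : List ℤ) (d : ℕ) :
    lastDescentLen (u ++ 1 :: List.replicate d (-1)) = d := by
  unfold lastDescentLen
  have h : (u ++ 1 :: List.replicate d (-1 : ℤ)).reverse
      = List.replicate d (-1) ++ 1 :: u.reverse := by simp
  rw [h, List.takeWhile_append_of_pos (by simp)]
  simp

theorem le_lastDescentLen_append (a : List ℤ) (j : ℕ) :
    j ≤ lastDescentLen (a ++ List.replicate j (-1)) := by
  unfold lastDescentLen
  rw [List.reverse_append, List.reverse_replicate, List.takeWhile_append_of_pos (by simp)]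
  simp

theorem exists_eq_append_replicate (s : List ℤ) {j : ℕ} (hj : j ≤ lastDescentLen s) :
    ∃ a, s = a ++ List.replicate j (-1) := by
  have h1 : s.reverse.takeWhile (fun x => x == (-1 : ℤ))
      = List.replicate (lastDescentLen s) (-1) := by
    rw [List.eq_replicate_iff]
    refine ⟨rfl, fun b hb => ?_⟩
    simpa using List.mem_takeWhile_imp hb
  have h2 := List.takeWhile_append_dropWhile (p := fun x => x == (-1 : ℤ)) (l := s.reverse)
  rw [h1] at h2
  obtain ⟨m, hm⟩ := Nat.exists_eq_add_of_le hj
  have h3 := congrArg List.reverse h2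
  rw [List.reverse_reverse, List.reverse_append, List.reverse_replicate, hm, Nat.add_comm,
    List.replicate_add, ← List.append_assoc] at h3
  exact ⟨_, h3.symm⟩

/-- A nonempty Dyck path ends in an up step followed by at least one down step: the height just
before the last up step is nonnegative, and the path ends at height `0`. -/
theorem IsDyck.exists_last_peak {s : List ℤ} (hs : IsDyck s) (hne : s ≠ []) :
    ∃ u d, s = u ++ 1 :: List.replicate (d + 1) (-1) := by
  obtain ⟨a, ha⟩ := exists_eq_append_replicate s le_rfl
  obtain ⟨hstep, hnn, hsum⟩ := hs
  rcases List.eq_nil_or_concat' a with rfl | ⟨u, x, rfl⟩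
  · exfalso
    rw [List.nil_append] at ha
    rw [ha, List.sum_replicate] at hsum
    have h0 : lastDescentLen s = 0 := by simpa using hsum
    rw [h0] at ha
    exact hne ha
  · have hx := hstep x (by rw [ha]; simp)
    rcases hx with rfl | rfl
    · have hu := hnn u.length
      have h1 : s.take u.length = u := by rw [ha]; simp
      rw [h1] at hu
      rw [ha] at hsum
      simp only [List.sum_append, List.sum_replicate, List.sum_singleton, nsmul_eq_mul] at hsum
      have h2 : 1 ≤ lastDescentLen s := by omega
      refine ⟨u, lastDescentLen s - 1, ?_⟩
      rw [Nat.sub_add_cancel h2]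
      simpa using ha
    · -- the last descent would be longer than its length
      exfalso
      have h1 := le_lastDescentLen_append u (lastDescentLen s + 1)
      rw [show u ++ List.replicate (lastDescentLen s + 1) (-1 : ℤ) = s by
        conv_rhs => rw [ha]
        simp [List.replicate_succ]] at h1
      omega

theorem parent_append (a : List ℤ) (j : ℕ) :
    parent (a ++ 1 :: List.replicate (j + 1) (-1)) = a ++ List.replicate j (-1) := by
  unfold parent
  rw [lastDescentLen_append_one]
  have h1 : (a ++ 1 :: List.replicate (j + 1) (-1 : ℤ)).length - (j + 1) - 1 = a.length := by
    simp; omega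
  have h2 : (a ++ 1 :: List.replicate (j + 1) (-1 : ℤ)).length - (j + 1) + 1 = a.length + 2 := by
    simp; omega
  rw [h1, h2, List.take_left, List.drop_append]
  simp [List.replicate_succ]

theorem son_append (a : List ℤ) (j : ℕ) :
    son (a ++ List.replicate j (-1)) j = a ++ 1 :: List.replicate (j + 1) (-1) := by
  unfold son
  have h1 : (a ++ List.replicate j (-1 : ℤ)).length - j = a.length := by simp
  rw [h1, List.take_left, List.drop_left]
  simp [List.replicate_succ]

/-! ### Sons of a Dyck path -/

/-- Inserting or removing a peak preserves and reflects being a Dyck path. -/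
theorem isDyck_insert_peak (a b : List ℤ) :
    IsDyck (a ++ 1 :: (-1) :: b) ↔ IsDyck (a ++ b) := by
  have key : ∀ m, ((a ++ 1 :: (-1) :: b).take (a.length + (m + 2))).sum
      = ((a ++ b).take (a.length + m)).sum := by
    intro m
    rw [List.take_length_add_append, List.take_length_add_append]
    simp
  have keyl : ∀ i, i ≤ a.length → (a ++ 1 :: (-1) :: b).take i = (a ++ b).take i := by
    intro i hi
    rw [List.take_append_of_le_length hi, List.take_append_of_le_length hi]
  have keym : ((a ++ 1 :: (-1) :: b).take (a.length + 1)).sum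
      = ((a ++ b).take a.length).sum + 1 := by
    rw [List.take_length_add_append, List.take_left]
    simp
  unfold IsDyck
  refine and_congr ?_ (and_congr ⟨fun h i => ?_, fun h i => ?_⟩ ?_)
  · simp only [List.mem_append, List.mem_cons]
    constructor
    · intro h x hx
      exact h x (by tauto)
    · rintro h x (hx | rfl | rfl | hx)
      · exact h x (.inl hx)
      · simp
      · simp
      · exact h x (.inr hx)
  · rcases le_total i a.length with hi | hi
    · rw [← keyl i hi]; exact h i
    · obtain ⟨m, rfl⟩ := Nat.exists_eq_add_of_le hi
      rw [← key]; exact h _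
  · rcases le_total i a.length with hi | hi
    · rw [keyl i hi]; exact h i
    · obtain ⟨m, rfl⟩ := Nat.exists_eq_add_of_le hi
      match m with
      | 0 => rw [keyl (a.length + 0) le_rfl]; exact h _
      | 1 => rw [keym]; have := h a.length; omega
      | m + 2 => rw [key]; exact h _
  · simp

theorem area_append (a b : List ℤ) :
    area (a ++ b) = area a + b.length * a.sum + area b := by
  unfold area
  rw [List.length_append, Nat.add_right_comm, Finset.sum_range_add,
    Finset.sum_range_succ' (fun i => (b.take i).sum)]
  have h1 : ∀ i ∈ Finset.range (a.length + 1), ((a ++ b).take i).sum = (a.take i).sum := by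
    intro i hi
    rw [List.take_append_of_le_length (by simpa [Nat.lt_succ_iff] using hi)]
  have h2 : ∀ i ∈ Finset.range b.length,
      ((a ++ b).take (a.length + 1 + i)).sum = a.sum + (b.take (i + 1)).sum := by
    intro i _
    rw [show a.length + 1 + i = a.length + (i + 1) by omega, List.take_length_add_append]
    simp
  rw [Finset.sum_congr rfl h1, Finset.sum_congr rfl h2, Finset.sum_add_distrib]
  simp
  ring

theorem area_insert_peak (a b : List ℤ) :
    area (a ++ 1 :: (-1) :: b) = area (a ++ b) + 2 * a.sum + 1 := by
  have h : a ++ 1 :: (-1) :: b = a ++ ([1, -1] ++ b) := rfl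
  have h1 : area [1, -1] = 1 := by simp [area, Finset.sum_range_succ]
  rw [h, area_append, area_append [1, -1], area_append a b, h1]
  simp
  ring

section Sons

variable {P : List ℤ} {j : ℕ}

theorem isDyck_son (hP : IsDyck P) (hj : j ≤ lastDescentLen P) : IsDyck (son P j) := by
  obtain ⟨a, rfl⟩ := exists_eq_append_replicate P hj
  rw [son_append, List.replicate_succ, isDyck_insert_peak]
  exact hP

theorem parent_son (hj : j ≤ lastDescentLen P) : parent (son P j) = P := by
  obtain ⟨a, rfl⟩ := exists_eq_append_replicate P hj
  rw [son_append, parent_append]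

theorem length_son (hj : j ≤ lastDescentLen P) : (son P j).length = P.length + 2 := by
  obtain ⟨a, rfl⟩ := exists_eq_append_replicate P hj
  rw [son_append]
  simp
  omega

theorem area_son (hP : IsDyck P) (hj : j ≤ lastDescentLen P) :
    area (son P j) = area P + 2 * j + 1 := by
  obtain ⟨a, rfl⟩ := exists_eq_append_replicate P hj
  -- the total sum of `P` is `0`, so the peak is inserted at height `j`
  have h : a.sum = j := by
    have := hP.2.2
    simp at this
    omega
  rw [son_append, List.replicate_succ, area_insert_peak, h]

theorem IsDyck.parent_and_son {Q : List ℤ} (hQ : IsDyck Q) (hne : Q ≠ []) :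
    IsDyck (parent Q) ∧ ∃ j ≤ lastDescentLen (parent Q), Q = son (parent Q) j := by
  obtain ⟨u, d, rfl⟩ := hQ.exists_last_peak hne
  rw [parent_append]
  refine ⟨?_, d, le_lastDescentLen_append u d, (son_append u d).symm⟩
  rwa [List.replicate_succ, isDyck_insert_peak] at hQ

theorem son_mem_fiber {Q : List ℤ} (hQ : IsDyck Q) (hne : Q ≠ [])
    (hj : j ≤ lastDescentLen (parent Q)) : son (parent Q) j ∈ fiber Q := by
  obtain ⟨hP, j', hj', h⟩ := hQ.parent_and_son hne
  refine ⟨isDyck_son hP hj, ?_, parent_son hj⟩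
  conv_rhs => rw [h]
  rw [length_son hj, length_son hj']

end Sons

/-! ### Fibers of the parent map -/

section Fibers

variable {Q : List ℤ}

theorem fiber_eq_image (hQ : IsDyck Q) (hne : Q ≠ []) :
    fiber Q = son (parent Q) '' Set.Iic (lastDescentLen (parent Q)) := by
  ext R
  constructor
  · rintro ⟨hR, hlen, hpar⟩
    have hRne : R ≠ [] := by
      rw [← List.length_pos_iff, hlen]
      exact List.length_pos_iff.2 hne
    obtain ⟨-, j, hj, h⟩ := hR.parent_and_son hRne
    rw [hpar] at hj h
    exact ⟨j, hj, h.symm⟩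
  · rintro ⟨j, hj, rfl⟩
    exact son_mem_fiber hQ hne hj

theorem card_fiber (hQ : IsDyck Q) (hne : Q ≠ []) :
    Nat.card (fiber Q) = lastDescentLen (parent Q) + 1 := by
  obtain ⟨hP, -⟩ := hQ.parent_and_son hne
  rw [fiber_eq_image hQ hne, Nat.card_image_of_injOn]
  · simp
  · -- distinct sons have distinct areas
    intro j hj j' hj' h
    have h' := congrArg area h
    rw [area_son hP hj, area_son hP hj'] at h'
    omega

theorem top_iff (hQ : IsDyck Q) (hne : Q ≠ []) :
    (∀ R ∈ fiber Q, area R ≤ area Q) ↔ Q = son (parent Q) (lastDescentLen (parent Q)) := by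
  obtain ⟨hP, j, hj, h⟩ := hQ.parent_and_son hne
  have hA : area Q = area (parent Q) + 2 * j + 1 := by
    rw [← area_son hP hj, ← h]
  constructor
  · intro hmax
    have h1 := hmax _ (son_mem_fiber hQ hne le_rfl)
    rw [area_son hP le_rfl, hA] at h1
    have h2 : j = lastDescentLen (parent Q) := by omega
    rwa [h2] at h
  · intro hQe R hR
    rw [fiber_eq_image hQ hne] at hR
    obtain ⟨m, hm, rfl⟩ := hR
    rw [Set.mem_Iic] at hm
    have h1 := congrArg area hQe
    rw [area_son hP le_rfl] at h1
    rw [area_son hP hm, h1]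
    omega

theorem bottom_iff (hQ : IsDyck Q) (hne : Q ≠ []) :
    (∀ R ∈ fiber Q, area Q ≤ area R) ↔ Q = son (parent Q) 0 := by
  obtain ⟨hP, j, hj, h⟩ := hQ.parent_and_son hne
  have hA : area Q = area (parent Q) + 2 * j + 1 := by
    rw [← area_son hP hj, ← h]
  constructor
  · intro hmin
    have h1 := hmin _ (son_mem_fiber hQ hne (Nat.zero_le _))
    rw [area_son hP (Nat.zero_le _), hA] at h1
    have h2 : j = 0 := by omega
    rwa [h2] at h
  · intro hQe R hR
    rw [fiber_eq_image hQ hne] at hR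
    obtain ⟨m, hm, rfl⟩ := hR
    rw [Set.mem_Iic] at hm
    have h1 := congrArg area hQe
    rw [area_son hP (Nat.zero_le _)] at h1
    rw [area_son hP hm, h1]
    omega

end Fibers

/-- For `n ≥ 2`, `0 ≤ k ≤ n − 2` and `i ∈ ℕ`: the number of Dyck
paths of semilength `n` of rank `i` (i.e. area `n + 2i`) that are the top (maximal
rank element) of a fiber of cardinality `k + 2` of the parent map equals the number
of Dyck paths of semilength `n` of rank `i − k − 1` that are the bottom (minimal rank
element) of a fiber of cardinality `k + 2` (this count being `0` when `i < k + 1`).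
Equivalently, `A_n^{(k)}(x) = x^{k+1} · P_n^{(k)}(x)`. -/
theorem fiber_tops_eq_fiber_bottoms_shifted (n k i : ℕ) (hn : 2 ≤ n) (hk : k ≤ n - 2) :
    Nat.card {Q : List ℤ // IsDyck Q ∧ Q.length = 2 * n ∧
        Nat.card (fiber Q) = k + 2 ∧
        (∀ R ∈ fiber Q, area R ≤ area Q) ∧
        area Q = (n : ℤ) + 2 * i} =
    Nat.card {Q : List ℤ // IsDyck Q ∧ Q.length = 2 * n ∧
        Nat.card (fiber Q) = k + 2 ∧
        (∀ R ∈ fiber Q, area Q ≤ area R) ∧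
        area Q = (n : ℤ) + 2 * ((i : ℤ) - (k : ℤ) - 1)} := by
  have hne : ∀ Q : List ℤ, Q.length = 2 * n → Q ≠ [] := by
    rintro Q hQ rfl
    simp at hQ
    omega
  refine Nat.card_congr
    { toFun := fun Q => ⟨son (parent Q.1) 0, ?_⟩
      invFun := fun Q => ⟨son (parent Q.1) (lastDescentLen (parent Q.1)), ?_⟩
      left_inv := ?_
      right_inv := ?_ }
  · obtain ⟨Q, hQ, hlen, hcard, htop, harea⟩ := Q
    have hQne := hne Q hlen
    obtain ⟨hP, -⟩ := hQ.parent_and_son hQne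
    obtain ⟨hB, hBlen, hBpar⟩ := son_mem_fiber hQ hQne (Nat.zero_le _)
    rw [hlen] at hBlen
    have hBne := hne _ hBlen
    have hQe := congrArg area ((top_iff hQ hQne).1 htop)
    rw [card_fiber hQ hQne] at hcard
    rw [area_son hP le_rfl] at hQe
    refine ⟨hB, hBlen, ?_, ?_, ?_⟩
    · rw [card_fiber hB hBne, hBpar, hcard]
    · rw [bottom_iff hB hBne, hBpar]
    · rw [area_son hP (Nat.zero_le _)]
      push_cast
      omega
  · obtain ⟨Q, hQ, hlen, hcard, hbot, harea⟩ := Q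
    have hQne := hne Q hlen
    obtain ⟨hP, -⟩ := hQ.parent_and_son hQne
    obtain ⟨hT, hTlen, hTpar⟩ := son_mem_fiber hQ hQne le_rfl
    rw [hlen] at hTlen
    have hTne := hne _ hTlen
    have hQe := congrArg area ((bottom_iff hQ hQne).1 hbot)
    rw [card_fiber hQ hQne] at hcard
    rw [area_son hP (Nat.zero_le _)] at hQe
    refine ⟨hT, hTlen, ?_, ?_, ?_⟩
    · rw [card_fiber hT hTne, hTpar, hcard]
    · rw [top_iff hT hTne, hTpar]
    · rw [area_son hP le_rfl]
      push_cast at hQe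
      omega
  · rintro ⟨Q, hQ, hlen, hcard, htop, harea⟩
    apply Subtype.ext
    simp only [parent_son (Nat.zero_le _)]
    exact ((top_iff hQ (hne Q hlen)).1 htop).symm
  · rintro ⟨Q, hQ, hlen, hcard, hbot, harea⟩
    apply Subtype.ext
    simp only [parent_son le_rfl]
    exact ((bottom_iff hQ (hne Q hlen)).1 hbot).symm
end

section
/- For all n ≥ 3 and 0 ≤ k ≤ n−2, the polynomials P_n^{(k)}(x) satisfy the ballot-like recurrence P_n^{(k)}(x) = x^k · Σ_{i=max(k−1,0)}^{n−3} P_{n−1}^{(i)}(x). -/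
/-- `endsUDkUD s k` says the final `k + 3` steps of `s` are
`+1`, followed by `k + 1` copies of `-1`, followed by `+1, -1`
(i.e. `s` ends with `U D^{k+1} U D`). -/
def endsUDkUD (s : List ℤ) (k : ℕ) : Prop :=
  ∃ t : List ℤ, s = t ++ (1 :: (List.replicate (k + 1) (-1) ++ [1, -1]))

/-- The polynomial `P_n^{(k)}(x) = Σ_P x^{rank P}`, the sum being over all Dyck
paths `P` of semilength `n` ending with `U D^{k+1} U D`; the coefficient of
`x^i` is the number of such paths of rank `i`, i.e. of area `n + 2i`
(all ranks are at most `n(n-1)/2 ≤ n²`, so the range below is exhaustive). -/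
noncomputable def Pnk (n k : ℕ) : Polynomial ℤ :=
  ∑ i ∈ Finset.range (n * n + 1),
    Polynomial.C ((Nat.card {P : List ℤ // IsDyck P ∧ P.length = 2 * n ∧
      endsUDkUD P k ∧ area P = (n : ℤ) + 2 * i}) : ℤ) * Polynomial.X ^ i

/-- The Dyck paths of semilength `n` and area `a` ending in `U D^{k+1} U D`. -/
def paths (n k : ℕ) (a : ℤ) : Set (List ℤ) :=
  {P | IsDyck P ∧ P.length = 2 * n ∧ endsUDkUD P k ∧ area P = a}

/-- The word `D^k U D`. -/
def tail (k : ℕ) : List ℤ := List.replicate k (-1) ++ [1, -1]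

/-! ### Steps, heights and area -/

lemma sum_le_length {s : List ℤ} (h : ∀ x ∈ s, x = 1 ∨ x = -1) : s.sum ≤ s.length := by
  induction s with
  | nil => simp
  | cons x s ih =>
    have h1 := ih fun y hy => h y (List.mem_cons_of_mem _ hy)
    rcases h x (by simp) with rfl | rfl <;> simp <;> omega

lemma neg_length_le_sum {s : List ℤ} (h : ∀ x ∈ s, x = 1 ∨ x = -1) :
    -(s.length : ℤ) ≤ s.sum := by
  induction s with
  | nil => simp
  | cons x s ih =>
    have h1 := ih fun y hy => h y (List.mem_cons_of_mem _ hy)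
    rcases h x (by simp) with rfl | rfl <;> simp <;> omega

lemma sum_emod_two {s : List ℤ} (h : ∀ x ∈ s, x = 1 ∨ x = -1) :
    s.sum % 2 = (s.length : ℤ) % 2 := by
  induction s with
  | nil => simp
  | cons x s ih =>
    have h1 := ih fun y hy => h y (List.mem_cons_of_mem _ hy)
    rcases h x (by simp) with rfl | rfl <;> simp <;> omega

lemma area_cons (x : ℤ) (s : List ℤ) : area (x :: s) = (s.length + 1) * x + area s := by
  unfold area
  rw [List.length_cons, Finset.sum_range_succ']
  simp [Finset.sum_add_distrib]

lemma area_append_s6 (s t : List ℤ) : area (s ++ t) = area s + t.length * s.sum + area t := by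
  induction s with
  | nil => simp [area]
  | cons x s ih =>
    rw [List.cons_append, area_cons, area_cons, ih]
    simp
    ring

lemma area_le {n : ℕ} {s : List ℤ} (hs : IsDyck s) (hl : s.length = 2 * n) :
    area s ≤ n + 2 * (n * n : ℕ) := by
  unfold area
  have key : ∀ i ∈ Finset.range (s.length + 1), (s.take i).sum ≤ (n : ℤ) := by
    intro i hi
    have h1 := sum_le_length (s := s.take i) fun x hx => hs.1 x (List.mem_of_mem_take hx)
    have h2 := neg_length_le_sum (s := s.drop i) fun x hx => hs.1 x (List.mem_of_mem_drop hx)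
    have h3 : (s.take i).sum + (s.drop i).sum = 0 := by
      rw [← List.sum_append, List.take_append_drop, hs.2.2]
    rw [Finset.mem_range] at hi
    rw [List.length_take] at h1
    rw [List.length_drop] at h2
    omega
  refine (Finset.sum_le_card_nsmul _ _ _ key).trans (le_of_eq ?_)
  rw [Finset.card_range, hl, nsmul_eq_mul]
  push_cast
  ring

/-- Heights after an odd number of steps are odd, hence at least `1`. -/
lemma le_area {n : ℕ} {s : List ℤ} (hs : IsDyck s) (hl : s.length = 2 * n) :
    (n : ℤ) ≤ area s := by
  unfold area
  have key : ∀ i ∈ Finset.range (s.length + 1), (i : ℤ) % 2 ≤ (s.take i).sum := by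
    intro i hi
    have h1 := sum_emod_two (s := s.take i) fun x hx => hs.1 x (List.mem_of_mem_take hx)
    have h2 := hs.2.1 i
    rw [Finset.mem_range] at hi
    rw [List.length_take] at h1
    omega
  refine le_trans (le_of_eq ?_) (Finset.sum_le_sum key)
  rw [hl]
  clear hl key hs
  induction n with
  | zero => simp
  | succ n ih =>
    rw [show 2 * (n + 1) + 1 = 2 * n + 1 + 1 + 1 by ring, Finset.sum_range_succ,
      Finset.sum_range_succ, ← ih]
    push_cast
    omega

/-! ### Coefficients of the path polynomials -/

lemma coeff_Pnk (n k m : ℕ) : (Pnk n k).coeff m = ((paths n k (n + 2 * m)).ncard : ℤ) := by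
  have h0 : (Pnk n k).coeff m =
      if m < n * n + 1 then ((paths n k (n + 2 * m)).ncard : ℤ) else 0 := by
    unfold Pnk
    simp only [Polynomial.finsetSum_coeff, Polynomial.coeff_C_mul_X_pow]
    rw [Finset.sum_ite_eq]
    simp only [Finset.mem_range]
    rfl
  rw [h0]
  split_ifs with h
  · rfl
  · have : paths n k (n + 2 * m) = ∅ := by
      ext P
      simp only [Set.mem_empty_iff_false, iff_false]
      rintro ⟨h1, h2, -, h4⟩
      have := area_le h1 h2
      omega
    simp [this]

lemma paths_finite (n k : ℕ) (a : ℤ) : (paths n k a).Finite := by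
  refine ((List.finite_length_eq Bool (2 * n)).image
    (List.map fun b => if b then (1 : ℤ) else -1)).subset ?_
  rintro P ⟨h1, h2, -⟩
  refine ⟨P.map fun x => decide (x = 1), by simpa using h2, ?_⟩
  rw [List.map_map]
  conv_rhs => rw [← List.map_id P]
  refine List.map_congr_left fun x hx => ?_
  rcases h1.1 x hx with rfl | rfl <;> simp

/-! ### Removing the peak before the tail -/

lemma isDyck_peak_iff (t s : List ℤ) : IsDyck (t ++ 1 :: -1 :: s) ↔ IsDyck (t ++ s) := by
  unfold IsDyck
  refine and_congr ?_ (and_congr ?_ ?_)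
  · simp only [List.mem_append, List.mem_cons]
    grind
  · -- The only new height is that of the peak, one above the height of `t`.
    constructor
    · intro h i
      rcases le_total i t.length with hi | hi
      · have := h i
        rwa [List.take_append_of_le_length hi] at this ⊢
      · obtain ⟨j, rfl⟩ := Nat.exists_eq_add_of_le hi
        have := h (t.length + (j + 2))
        rw [List.take_length_add_append] at this ⊢
        simpa using this
    · intro h i
      rcases le_total i t.length with hi | hi
      · have := h i
        rwa [List.take_append_of_le_length hi] at this ⊢
      · obtain ⟨j, rfl⟩ := Nat.exists_eq_add_of_le hi
        have h0 := h (t.length + 0)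
        have h1 := h (t.length + (j - 2))
        rw [List.take_length_add_append] at h0 h1 ⊢
        rcases j with _ | _ | j
        · simpa using h0
        · simp at h0 ⊢
          omega
        · simpa using h1
  · simp

lemma sum_of_isDyck_tail {t : List ℤ} {k : ℕ} (h : IsDyck (t ++ tail k)) : t.sum = k := by
  have := h.2.2
  simp [tail] at this
  omega

lemma area_peak {t : List ℤ} {k : ℕ} (h : IsDyck (t ++ tail k)) :
    area (t ++ 1 :: -1 :: tail k) = area (t ++ tail k) + (2 * k + 1) := by
  rw [area_append_s6, area_append_s6, area_cons, area_cons, sum_of_isDyck_tail h]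
  simp only [List.length_cons]
  push_cast
  ring

/-- The prefixes `t` for which `t D^k U D` is a Dyck path of semilength `n` and area `a`. -/
def prefixes (n k : ℕ) (a : ℤ) : Set (List ℤ) :=
  {t | IsDyck (t ++ tail k) ∧ (t ++ tail k).length = 2 * n ∧ area (t ++ tail k) = a}

lemma paths_eq_image (n k : ℕ) (a : ℤ) :
    paths (n + 1) k (a + (2 * k + 1)) = (fun t => t ++ 1 :: -1 :: tail k) '' prefixes n k a := by
  ext P
  constructor
  · rintro ⟨h1, h2, ⟨t, rfl⟩, h4⟩
    change IsDyck (t ++ 1 :: -1 :: tail k) at h1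
    change (t ++ 1 :: -1 :: tail k).length = _ at h2
    change area (t ++ 1 :: -1 :: tail k) = _ at h4
    rw [isDyck_peak_iff] at h1
    rw [area_peak h1] at h4
    refine ⟨t, ⟨h1, ?_, by omega⟩, rfl⟩
    simp at h2 ⊢
    omega
  · rintro ⟨t, ⟨h1, h2, h3⟩, rfl⟩
    refine ⟨(isDyck_peak_iff _ _).2 h1, ?_, ⟨t, rfl⟩, ?_⟩
    · simp at h2 ⊢
      omega
    · change area (t ++ 1 :: -1 :: tail k) = _
      rw [area_peak h1, h3]

/-! ### The length of the descent before the last peak -/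

lemma exists_last_up (t : List ℤ) (h : ∀ x ∈ t, x = 1 ∨ x = -1) :
    (∃ j, t = List.replicate j (-1)) ∨ ∃ u j, t = u ++ 1 :: List.replicate j (-1) := by
  induction t using List.reverseRecOn with
  | nil => exact Or.inl ⟨0, rfl⟩
  | append_singleton t x ih =>
    rcases h x (by simp) with rfl | rfl
    · exact Or.inr ⟨t, 0, rfl⟩
    · rcases ih fun y hy => h y (List.mem_append_left _ hy) with ⟨j, rfl⟩ | ⟨u, j, rfl⟩
      · exact Or.inl ⟨j + 1, by rw [List.replicate_succ']⟩
      · exact Or.inr ⟨u, j + 1, by simp [List.replicate_succ']⟩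

lemma lastDescentLen_append (t : List ℤ) (j : ℕ) :
    lastDescentLen (t ++ 1 :: List.replicate j (-1)) = j := by
  unfold lastDescentLen
  simp [List.takeWhile_append_of_pos]

lemma endsUDkUD_unique {P : List ℤ} {i j : ℕ} (hi : endsUDkUD P i) (hj : endsUDkUD P j) :
    i = j := by
  obtain ⟨t, rfl⟩ := hi
  obtain ⟨u, hu⟩ := hj
  rw [← List.cons_append, ← List.cons_append, ← List.append_assoc, ← List.append_assoc] at hu
  have h := congrArg lastDescentLen (List.append_cancel_right hu)
  rw [lastDescentLen_append, lastDescentLen_append] at h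
  omega

lemma biUnion_paths (n k : ℕ) (a : ℤ) (hn : 2 ≤ n) :
    (⋃ i ∈ Finset.Icc (k - 1) (n - 2), paths n i a) = (fun t => t ++ tail k) '' prefixes n k a := by
  ext P
  simp only [Set.mem_iUnion, Finset.mem_Icc, exists_prop]
  constructor
  · rintro ⟨i, ⟨hi, -⟩, h1, h2, ⟨u, hu⟩, h4⟩
    have hP : (u ++ 1 :: List.replicate (i + 1 - k) (-1)) ++ tail k = P := by
      obtain ⟨j, hj⟩ : ∃ j, i + 1 = j + k := ⟨i + 1 - k, by omega⟩
      rw [hu, tail, hj, Nat.add_sub_cancel, List.replicate_add]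
      simp only [List.append_assoc, List.cons_append]
    exact ⟨_, ⟨by rwa [hP], by rwa [hP], by rwa [hP]⟩, hP⟩
  · rintro ⟨t, ⟨h1, h2, h3⟩, rfl⟩
    have hsum := sum_of_isDyck_tail h1
    rcases exists_last_up t fun x hx => h1.1 x (List.mem_append_left _ hx) with
      ⟨j, rfl⟩ | ⟨u, j, rfl⟩
    · -- A prefix of down steps only ends at height `-j = k`, so the path would be `U D`.
      simp [tail] at hsum h2
      omega
    · have hu0 : 0 ≤ u.sum := by
        have := h1.2.1 u.length
        simpa using this
      have hu1 := sum_le_length (s := u) fun x hx => h1.1 x (by simp [hx])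
      simp [tail] at hsum h2
      refine ⟨j + k - 1, by omega, h1, by simp [tail]; omega, ⟨u, ?_⟩, h3⟩
      rw [tail, show j + k - 1 + 1 = j + k by omega, List.replicate_add]
      simp only [List.append_assoc, List.cons_append]

lemma ncard_paths_succ (n k : ℕ) (a : ℤ) (hn : 2 ≤ n) :
    (paths (n + 1) k (a + (2 * k + 1))).ncard =
      ∑ i ∈ Finset.Icc (k - 1) (n - 2), (paths n i a).ncard := by
  classical
  rw [paths_eq_image, Set.ncard_image_of_injective _ (List.append_left_injective _),
    ← Set.ncard_image_of_injective _ (List.append_left_injective (tail k)),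
    ← biUnion_paths n k a hn]
  simp only [fun i => Set.ncard_eq_toFinset_card (paths n i a) (paths_finite n i a)]
  rw [← Finset.card_biUnion, ← Set.ncard_coe_finset]
  · congr 1
    ext P
    simp
  · intro i _ j _ hij
    refine Finset.disjoint_left.2 ?_
    intro P hi hj
    simp only [Set.Finite.mem_toFinset] at hi hj
    exact hij (endsUDkUD_unique hi.2.2.1 hj.2.2.1)

/-- For `n ≥ 3` and `0 ≤ k ≤ n − 2`, the ballot-like recurrence
`P_n^{(k)}(x) = x^k · Σ_{i = max(k−1,0)}^{n−3} P_{n−1}^{(i)}(x)` holds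
(here `max(k−1,0)` is the truncated subtraction `k - 1` in `ℕ`). -/
theorem Pnk_ballot_recurrence (n k : ℕ) (hn : 3 ≤ n) (hk : k ≤ n - 2) :
    Pnk n k = Polynomial.X ^ k * ∑ i ∈ Finset.Icc (k - 1) (n - 3), Pnk (n - 1) i := by
  obtain ⟨n, rfl⟩ : ∃ m, n = m + 1 := ⟨n - 1, by omega⟩
  rw [show n + 1 - 3 = n - 2 by omega, Nat.add_sub_cancel]
  ext m
  rw [Polynomial.coeff_X_pow_mul', Polynomial.finsetSum_coeff, coeff_Pnk]
  simp only [coeff_Pnk]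
  -- Removing the peak lowers the rank from `m` to `m - k`.
  rw [show (((n + 1 : ℕ) : ℤ) + 2 * m) = (n + 2 * ((m : ℤ) - k)) + (2 * k + 1) by
    push_cast; ring, ncard_paths_succ n k _ (by omega)]
  split_ifs with h
  · push_cast [Nat.cast_sub h]
    rfl
  · rw [Nat.cast_eq_zero]
    refine Finset.sum_eq_zero fun i _ => ?_
    have : paths n i (n + 2 * ((m : ℤ) - k)) = ∅ := by
      ext P
      simp only [Set.mem_empty_iff_false, iff_false]
      rintro ⟨h1, h2, -, h4⟩
      have := le_area h1 h2
      omega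
    simp [this]
end
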